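/- (Proposition 3.6, isentropic Euler case.) Let (ρ,u) be a classical solution of the isentropic compressible Euler equations on ℝⁿ × [0,T] satisfying the decay and integrability conditions, and set IJ(0) = G(0) − F(0) + IE(0). If 1 < γ ≤ 1 + 2/n, then for all t ∈ [0,T] the potential energy satisfies I(t) ≤ IJ(0)/(t+1)^{n(γ−1)}; if γ > 1 + 2/n, then I(t) ≤ IJ(0)/(t+1)² for all t ∈ [0,T]. -/

import Mathlib

open MeasureTheory Filter
open scoped InnerProductSpace

noncomputable section

/-- A classical solution of the isentropic compressible Euler equations
`∂ₜρ + div(ρu) = 0`, `∂ₜ(ρuᵢ) + div(ρuᵢu) + ∂ᵢ(ρ^γ) = 0` on `ℝⁿ × [0,T]`,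
together with the decay conditions (9-25), the integrability conditions on the
physical quantities, and differentiability of these quantities with derivatives
computed by differentiating under the integral sign. -/
structure IsentropicEulerSolution (n : ℕ) (γ T : ℝ) where
  ρ : ℝ → EuclideanSpace ℝ (Fin n) → ℝ
  u : ℝ → EuclideanSpace ℝ (Fin n) → EuclideanSpace ℝ (Fin n)
  ρ_nonneg : ∀ t ∈ Set.Icc 0 T, ∀ x, 0 ≤ ρ t x
  /-- `ρ` is `C¹` on `[0,T] × ℝⁿ`. -/
  smooth_ρ : ContDiffOn ℝ 1 (fun p : ℝ × EuclideanSpace ℝ (Fin n) => ρ p.1 p.2)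
    (Set.Icc 0 T ×ˢ Set.univ)
  /-- `u` is `C¹` on `[0,T] × ℝⁿ`. -/
  smooth_u : ContDiffOn ℝ 1 (fun p : ℝ × EuclideanSpace ℝ (Fin n) => u p.1 p.2)
    (Set.Icc 0 T ×ˢ Set.univ)
  /-- Conservation of mass: `∂ₜρ + div(ρu) = 0`. -/
  mass_eq : ∀ t ∈ Set.Icc 0 T, ∀ x,
    deriv (fun τ => ρ τ x) t
      + ∑ i : Fin n, fderiv ℝ (fun y => ρ t y * u t y i) x (EuclideanSpace.single i 1) = 0
  /-- Conservation of momentum: `∂ₜ(ρuᵢ) + div(ρuᵢu) + ∂ᵢ(ρ^γ) = 0`. -/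
  momentum_eq : ∀ t ∈ Set.Icc 0 T, ∀ x, ∀ i : Fin n,
    deriv (fun τ => ρ τ x * u τ x i) t
      + ∑ j : Fin n, fderiv ℝ (fun y => ρ t y * u t y i * u t y j) x (EuclideanSpace.single j 1)
      + fderiv ℝ (fun y => ρ t y ^ γ) x (EuclideanSpace.single i 1) = 0
  /-- decay: `|u| → 0` as `|x| → ∞`. -/
  decay_u : ∀ t ∈ Set.Icc 0 T,
    Tendsto (fun x => ‖u t x‖) (Bornology.cobounded _) (nhds 0)
  /-- decay: `ρ|u| = o(|x|^{-(n+1)})`. -/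
  decay_ρu : ∀ t ∈ Set.Icc 0 T,
    Tendsto (fun x => ‖x‖ ^ (n + 1) * (ρ t x * ‖u t x‖)) (Bornology.cobounded _) (nhds 0)
  /-- decay: `|∇ₓu| = o(|x|^{-n})`. -/
  decay_gradu : ∀ t ∈ Set.Icc 0 T,
    Tendsto (fun x => ‖x‖ ^ n * ‖fderiv ℝ (u t) x‖) (Bornology.cobounded _) (nhds 0)
  /-- decay: the pressure `ρ^γ = o(|x|^{-n})`. -/
  decay_p : ∀ t ∈ Set.Icc 0 T,
    Tendsto (fun x => ‖x‖ ^ n * ρ t x ^ γ) (Bornology.cobounded _) (nhds 0)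
  int_ρ : ∀ t ∈ Set.Icc 0 T, Integrable (ρ t)
  int_ρu : ∀ t ∈ Set.Icc 0 T, Integrable (fun x => ρ t x * ‖u t x‖)
  int_ρu2 : ∀ t ∈ Set.Icc 0 T, Integrable (fun x => ρ t x * ‖u t x‖ ^ 2)
  int_ρx2 : ∀ t ∈ Set.Icc 0 T, Integrable (fun x => ρ t x * ‖x‖ ^ 2)
  int_ρux : ∀ t ∈ Set.Icc 0 T, Integrable (fun x => ρ t x * ‖u t x‖ * ‖x‖)
  int_ργ : ∀ t ∈ Set.Icc 0 T, Integrable (fun x => ρ t x ^ γ)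
  /-- `M(t) = ∫ρ` is differentiable, by differentiation under the integral sign. -/
  hM : ∀ t ∈ Set.Icc 0 T,
    HasDerivAt (fun τ => ∫ x, ρ τ x) (∫ x, deriv (fun τ => ρ τ x) t) t
  /-- `ℙ(t) = ∫ρu` is differentiable, by differentiation under the integral sign. -/
  hP : ∀ t ∈ Set.Icc 0 T,
    HasDerivAt (fun τ => ∫ x, ρ τ x • u τ x) (∫ x, deriv (fun τ => ρ τ x • u τ x) t) t
  /-- `F(t) = ∫ρ u·x` is differentiable, by differentiation under the integral sign. -/
  hF : ∀ t ∈ Set.Icc 0 T,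
    HasDerivAt (fun τ => ∫ x, ρ τ x * ⟪u τ x, x⟫_ℝ)
      (∫ x, deriv (fun τ => ρ τ x * ⟪u τ x, x⟫_ℝ) t) t
  /-- `G(t) = (1/2)∫ρ|x|²` is differentiable, by differentiation under the integral sign. -/
  hG : ∀ t ∈ Set.Icc 0 T,
    HasDerivAt (fun τ => (1 / 2 : ℝ) * ∫ x, ρ τ x * ‖x‖ ^ 2)
      ((1 / 2 : ℝ) * ∫ x, deriv (fun τ => ρ τ x * ‖x‖ ^ 2) t) t
  /-- `IE(t) = E_k(t) + I(t)` is differentiable, by differentiation under the integral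
  sign. -/
  hIE : ∀ t ∈ Set.Icc 0 T,
    HasDerivAt (fun τ => ∫ x, ((1 / 2 : ℝ) * ρ τ x * ‖u τ x‖ ^ 2 + ρ τ x ^ γ / (γ - 1)))
      (∫ x, deriv (fun τ => (1 / 2 : ℝ) * ρ τ x * ‖u τ x‖ ^ 2 + ρ τ x ^ γ / (γ - 1)) t) t

namespace IsentropicEulerSolution

variable {n : ℕ} {γ T : ℝ}

/-- The mass `M(t) = ∫ ρ dx`. -/
def M (S : IsentropicEulerSolution n γ T) (t : ℝ) : ℝ := ∫ x, S.ρ t x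

/-- The momentum `ℙ(t) = ∫ ρ u dx`. -/
def P (S : IsentropicEulerSolution n γ T) (t : ℝ) : EuclideanSpace ℝ (Fin n) :=
  ∫ x, S.ρ t x • S.u t x

/-- The momentum weight `F(t) = ∫ ρ u·x dx`. -/
def F (S : IsentropicEulerSolution n γ T) (t : ℝ) : ℝ := ∫ x, S.ρ t x * ⟪S.u t x, x⟫_ℝ

/-- The momentum of inertia `G(t) = (1/2) ∫ ρ |x|² dx`. -/
def G (S : IsentropicEulerSolution n γ T) (t : ℝ) : ℝ := (1 / 2 : ℝ) * ∫ x, S.ρ t x * ‖x‖ ^ 2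

/-- The kinetic energy `E_k(t) = (1/2) ∫ ρ |u|² dx`. -/
def Ek (S : IsentropicEulerSolution n γ T) (t : ℝ) : ℝ :=
  (1 / 2 : ℝ) * ∫ x, S.ρ t x * ‖S.u t x‖ ^ 2

/-- The potential energy `I(t) = (1/(γ−1)) ∫ ρ^γ dx`. -/
def I (S : IsentropicEulerSolution n γ T) (t : ℝ) : ℝ := (1 / (γ - 1)) * ∫ x, S.ρ t x ^ γ

/-- The energy `IE(t) = E_k(t) + I(t)`. -/
def IE (S : IsentropicEulerSolution n γ T) (t : ℝ) : ℝ := S.Ek t + S.I t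

/-- The functional `IJ(t) = G(t) − (t+1)F(t) + (t+1)² IE(t)`. -/
def IJ (S : IsentropicEulerSolution n γ T) (t : ℝ) : ℝ :=
  S.G t - (t + 1) * S.F t + (t + 1) ^ 2 * S.IE t

end IsentropicEulerSolution

/-!
The functional `IJ` satisfies `IJ' = (t+1)(2 - n(γ-1)) I`, because `IE' = 0`, `G' = F` and the
virial identity `F' = 2 E_k + n(γ-1) I` holds. Completing the square,
`IJ - (t+1)² I = ½ ∫ ρ |x - (t+1)u|² ≥ 0`. With `a = max (2 - n(γ-1)) 0` this gives
`(t+1) IJ' ≤ a IJ`, so that `IJ / (t+1)^a` decreases, and `(t+1)² I ≤ IJ ≤ IJ(0) (t+1)^a`.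

The formulas for `F'` and `G'` cannot be read off from differentiation under the integral sign, as
the time derivatives of the densities need not be integrable. They are obtained in the limit from
the integrals against a spatial cutoff. All densities are dominated by
`½ρ|u|² + ρ^γ/(γ-1) + ½ρ|x|²`, whose integral is continuous in time, so by Dini's theorem its
tails are small uniformly in time; hence the derivatives of the truncated integrals converge
uniformly.
-/

section Divergence

variable {E : Type*} [NormedAddCommGroup E] [NormedSpace ℝ E]

/-- The divergence of a vector field, defined without coordinates as the trace of its
derivative; it has the junk value `0` at points of non-differentiability. -/
def divergence (v : E → E) (x : E) : ℝ := LinearMap.trace ℝ E (fderiv ℝ v x)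

lemma divergence_eq_sum_fderiv {n : ℕ} {v : EuclideanSpace ℝ (Fin n) → EuclideanSpace ℝ (Fin n)}
    {x : EuclideanSpace ℝ (Fin n)} (hv : DifferentiableAt ℝ v x) :
    divergence v x = ∑ i, fderiv ℝ (fun y => v y i) x (EuclideanSpace.single i 1) := by
  have hcoord (i : Fin n) :
      fderiv ℝ (fun y => v y i) x = (EuclideanSpace.proj i).comp (fderiv ℝ v x) :=
    ((EuclideanSpace.proj (𝕜 := ℝ) i).hasFDerivAt.comp x hv.hasFDerivAt).fderiv
  simp [divergence, LinearMap.trace_eq_sum_inner _ (EuclideanSpace.basisFun (Fin n) ℝ), hcoord,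
    EuclideanSpace.inner_single_left]

lemma divergence_add {v w : E → E} {x : E} (hv : DifferentiableAt ℝ v x)
    (hw : DifferentiableAt ℝ w x) :
    divergence (fun y => v y + w y) x = divergence v x + divergence w x := by
  simp [divergence, fderiv_fun_add hv hw]

variable [FiniteDimensional ℝ E]

lemma divergence_id (x : E) : divergence (fun y => y) x = Module.finrank ℝ E := by
  simp [divergence]

lemma divergence_smul {f : E → ℝ} {v : E → E} {x : E} (hf : DifferentiableAt ℝ f x)
    (hv : DifferentiableAt ℝ v x) :
    divergence (fun y => f y • v y) x = f x * divergence v x + fderiv ℝ f x (v x) := by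
  simp [divergence, fderiv_fun_smul hf hv]

lemma continuous_divergence {v : E → E} (hv : ContDiff ℝ 1 v) : Continuous (divergence v) :=
  (LinearMap.continuous_of_finiteDimensional
    (LinearMap.trace ℝ E ∘ₗ ContinuousLinearMap.coeLM ℝ)).comp (hv.continuous_fderiv one_ne_zero)

variable [MeasurableSpace E] [BorelSpace E] {μ : Measure E} [μ.IsAddHaarMeasure]

lemma integral_divergence_eq_zero_of_hasCompactSupport {v : E → E} (hv : ContDiff ℝ 1 v)
    (hvc : HasCompactSupport v) : ∫ x, divergence v x ∂μ = 0 := by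
  have hDv : Integrable (fderiv ℝ v) μ :=
    (hv.continuous_fderiv one_ne_zero).integrable_of_hasCompactSupport (hvc.fderiv ℝ)
  have hint : ∫ x, fderiv ℝ v x ∂μ = 0 := by
    ext w
    rw [ContinuousLinearMap.integral_apply hDv]
    simpa using integral_smul_fderiv_eq_neg_fderiv_smul_of_integrable (μ := μ) (v := w)
      (f := fun _ => (1 : ℝ)) (g := v) (by simp)
      (by simpa using hDv.apply_continuousLinearMap w)
      (by simpa using hv.continuous.integrable_of_hasCompactSupport hvc)
      (by fun_prop) (fun x _ => hv.differentiable one_ne_zero x)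
  let tr : (E →L[ℝ] E) →L[ℝ] ℝ :=
    LinearMap.toContinuousLinearMap (LinearMap.trace ℝ E ∘ₗ ContinuousLinearMap.coeLM ℝ)
  calc ∫ x, divergence v x ∂μ = tr (∫ x, fderiv ℝ v x ∂μ) := tr.integral_comp_comm hDv
    _ = 0 := by rw [hint, map_zero]

lemma integral_mul_divergence_eq_neg {ψ : E → ℝ} {v : E → E} (hψ : ContDiff ℝ 1 ψ)
    (hψc : HasCompactSupport ψ) (hv : ContDiff ℝ 1 v) :
    ∫ x, ψ x * divergence v x ∂μ = -∫ x, fderiv ℝ ψ x (v x) ∂μ := by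
  have hdiv : Integrable (fun x => ψ x * divergence v x) μ :=
    (hψ.continuous.mul (continuous_divergence hv)).integrable_of_hasCompactSupport hψc.mul_right
  have hgrad : Integrable (fun x => fderiv ℝ ψ x (v x)) μ :=
    ((hψ.continuous_fderiv one_ne_zero).clm_apply hv.continuous).integrable_of_hasCompactSupport
      ((hψc.fderiv ℝ).mono fun x hx h => hx (by simp [h]))
  rw [eq_neg_iff_add_eq_zero, ← integral_add hdiv hgrad,
    ← integral_divergence_eq_zero_of_hasCompactSupport (μ := μ) (hψ.smul hv) hψc.smul_right]
  exact integral_congr_ae <| ae_of_all _ fun x => (divergence_smul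
    (hψ.differentiable one_ne_zero x) (hv.differentiable one_ne_zero x)).symm

end Divergence

section Cutoff

variable {E : Type*} [NormedAddCommGroup E] [NormedSpace ℝ E] [FiniteDimensional ℝ E]

/-- The standard cutoff at scale `k + 1`: the bump function equal to `1` on the unit ball and
supported in the ball of radius `2`, rescaled to be `1` near the closed ball of radius `k`. -/
def cutoff (k : ℕ) (x : E) : ℝ := (default : ContDiffBump (0 : E)) ((k + 1 : ℝ)⁻¹ • x)

lemma contDiff_cutoff (k : ℕ) : ContDiff ℝ 1 (cutoff k : E → ℝ) :=
  (default : ContDiffBump (0 : E)).contDiff.comp (contDiff_const_smul _)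

lemma hasCompactSupport_cutoff (k : ℕ) : HasCompactSupport (cutoff k : E → ℝ) :=
  (default : ContDiffBump (0 : E)).hasCompactSupport.comp_homeomorph
    (Homeomorph.smulOfNeZero _ (inv_ne_zero k.cast_add_one_ne_zero))

lemma cutoff_nonneg (k : ℕ) (x : E) : 0 ≤ cutoff k x := ContDiffBump.nonneg _

lemma cutoff_le_one (k : ℕ) (x : E) : cutoff k x ≤ 1 := ContDiffBump.le_one _

lemma abs_mul_cutoff_sub_le (k : ℕ) (x : E) (a : ℝ) : |a * cutoff k x - a| ≤ |a| := by
  rw [← mul_sub_one, abs_mul]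
  exact mul_le_of_le_one_right (abs_nonneg a)
    (abs_le.2 ⟨by linarith [cutoff_nonneg k x], by linarith [cutoff_le_one k x]⟩)

lemma cutoff_eventuallyEq_one {k : ℕ} {x : E} (hx : x ∈ Metric.closedBall 0 (k : ℝ)) :
    cutoff k =ᶠ[nhds x] fun _ => 1 := by
  have hx' : x ∈ Metric.ball (0 : E) (k + 1) :=
    Metric.closedBall_subset_ball (lt_add_one _) hx
  filter_upwards [Metric.isOpen_ball.mem_nhds hx'] with y hy
  refine ContDiffBump.one_of_mem_closedBall _ ?_
  rw [mem_ball_zero_iff] at hy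
  rw [mem_closedBall_zero_iff, norm_smul, Real.norm_of_nonneg (by positivity),
    inv_mul_le_iff₀ (by positivity)]
  simpa [default] using hy.le

lemma cutoff_eq_one {k : ℕ} {x : E} (hx : x ∈ Metric.closedBall 0 (k : ℝ)) : cutoff k x = 1 :=
  (cutoff_eventuallyEq_one hx).self_of_nhds

lemma fderiv_cutoff_eq_zero {k : ℕ} {x : E} (hx : x ∈ Metric.closedBall 0 (k : ℝ)) :
    fderiv ℝ (cutoff k) x = 0 := by
  simp [(cutoff_eventuallyEq_one hx).fderiv_eq]

lemma exists_one_add_norm_mul_norm_fderiv_cutoff_le :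
    ∃ K, ∀ (k : ℕ) (x : E), (1 + ‖x‖) * ‖fderiv ℝ (cutoff k) x‖ ≤ K := by
  let φ : ContDiffBump (0 : E) := default
  have hcont : Continuous (fderiv ℝ φ) := φ.contDiff.continuous_fderiv (n := 1) one_ne_zero
  obtain ⟨C, hC⟩ := hcont.bounded_above_of_compact_support (φ.hasCompactSupport.fderiv ℝ)
  have hC0 : 0 ≤ C := (norm_nonneg _).trans (hC 0)
  refine ⟨3 * C, fun k x => ?_⟩
  have hk : (0 : ℝ) < k + 1 := by positivity
  have hfderiv : fderiv ℝ (cutoff k) x = (k + 1 : ℝ)⁻¹ • fderiv ℝ φ ((k + 1 : ℝ)⁻¹ • x) :=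
    fderiv_comp_smul _
  rw [hfderiv, norm_smul, Real.norm_of_nonneg (by positivity)]
  by_cases hx : (k + 1 : ℝ)⁻¹ • x ∈ tsupport φ
  · have hx' : ‖x‖ ≤ 2 * (k + 1) := by
      rw [φ.tsupport_eq, mem_closedBall_zero_iff, norm_smul, Real.norm_of_nonneg (by positivity),
        inv_mul_le_iff₀ hk, mul_comm] at hx
      simpa [φ, default] using hx
    calc (1 + ‖x‖) * ((k + 1 : ℝ)⁻¹ * ‖fderiv ℝ φ ((k + 1 : ℝ)⁻¹ • x)‖)
        ≤ (3 * (k + 1)) * ((k + 1 : ℝ)⁻¹ * C) := by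
          gcongr
          · linarith [k.cast_nonneg (α := ℝ)]
          · exact hC _
      _ = 3 * C := by field_simp
  · rw [fderiv_of_notMem_tsupport ℝ hx]
    simpa using hC0

end Cutoff

section IntegralDivergence

variable {E : Type*} [NormedAddCommGroup E] [NormedSpace ℝ E] [FiniteDimensional ℝ E]
  [MeasurableSpace E] [BorelSpace E] {μ : Measure E} [μ.IsAddHaarMeasure]

lemma integral_divergence_eq_zero {v : E → E} (hv : ContDiff ℝ 1 v) (hvi : Integrable v μ)
    (hdiv : Integrable (divergence v) μ) : ∫ x, divergence v x ∂μ = 0 := by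
  obtain ⟨K, hK⟩ := exists_one_add_norm_mul_norm_fderiv_cutoff_le (E := E)
  have hmem (x : E) : ∀ᶠ k : ℕ in atTop, x ∈ Metric.closedBall 0 (k : ℝ) := by
    filter_upwards [eventually_ge_atTop ⌈‖x‖⌉₊] with k hk
    exact mem_closedBall_zero_iff.2 (Nat.ceil_le.1 hk)
  have hleft : Tendsto (fun k : ℕ => ∫ x, cutoff k x * divergence v x ∂μ) atTop
      (nhds (∫ x, divergence v x ∂μ)) := by
    refine tendsto_integral_of_dominated_convergence _ (fun k =>
      ((contDiff_cutoff k).continuous.mul (continuous_divergence hv)).aestronglyMeasurable)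
      hdiv.norm (fun k => ae_of_all _ fun x => ?_) (ae_of_all _ fun x => ?_)
    · rw [norm_mul, Real.norm_of_nonneg (cutoff_nonneg k x)]
      exact mul_le_of_le_one_left (norm_nonneg _) (cutoff_le_one k x)
    · refine tendsto_const_nhds.congr' ?_
      filter_upwards [hmem x] with k hk
      rw [cutoff_eq_one hk, one_mul]
  have hright : Tendsto (fun k : ℕ => ∫ x, fderiv ℝ (cutoff k) x (v x) ∂μ) atTop (nhds 0) := by
    rw [← integral_zero E ℝ (μ := μ)]
    refine tendsto_integral_of_dominated_convergence _ (fun k =>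
      (((contDiff_cutoff k).continuous_fderiv one_ne_zero).clm_apply
        hv.continuous).aestronglyMeasurable)
      (hvi.norm.const_mul K) (fun k => ae_of_all _ fun x => ?_) (ae_of_all _ fun x => ?_)
    · refine (ContinuousLinearMap.le_opNorm _ _).trans ?_
      gcongr
      exact (le_mul_of_one_le_left (norm_nonneg _) (by simp)).trans (hK k x)
    · refine tendsto_const_nhds.congr' ?_
      filter_upwards [hmem x] with k hk
      rw [fderiv_cutoff_eq_zero hk, zero_apply]
  refine tendsto_nhds_unique hleft ?_
  simpa only [integral_mul_divergence_eq_neg (contDiff_cutoff _) (hasCompactSupport_cutoff _) hv,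
    neg_zero] using hright.neg

end IntegralDivergence

section UniformTails

variable {X : Type*} [MeasurableSpace X] {μ : Measure X}

lemma abs_integral_sub_le_setIntegral_compl {s : Set X} {f g e : X → ℝ} {C : ℝ}
    (hf : AEStronglyMeasurable f μ) (hg : Integrable g μ) (he : Integrable e μ)
    (hs : ∀ x ∈ s, f x = g x) (h : ∀ x, |f x - g x| ≤ C * e x) :
    |(∫ x, f x ∂μ) - ∫ x, g x ∂μ| ≤ C * ∫ x in sᶜ, e x ∂μ := by
  have hsub : Integrable (fun x => f x - g x) μ :=
    (he.const_mul C).mono' (hf.sub hg.1) (ae_of_all _ h)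
  have hfi : Integrable f μ := by simpa only [sub_add_cancel] using hsub.fun_add hg
  rw [← integral_sub hfi hg, ← integral_const_mul,
    ← setIntegral_eq_integral_of_forall_compl_eq_zero (s := sᶜ)
      fun x hx => sub_eq_zero.2 (hs x (not_not.1 hx)), ← Real.norm_eq_abs]
  exact norm_integral_le_of_norm_le (he.const_mul C).integrableOn (ae_of_all _ h)

lemma tendstoUniformlyOn_integral_of_eqOn {α ι : Type*} {l : Filter ι} {A : Set α}
    {s : ι → Set X} {e f : α → X → ℝ} {F : ι → α → X → ℝ} {C : ℝ}
    (htail : TendstoUniformlyOn (fun k t => ∫ x in (s k)ᶜ, e t x ∂μ) 0 l A)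
    (he : ∀ t ∈ A, Integrable (e t) μ) (hf : ∀ t ∈ A, Integrable (f t) μ)
    (hF : ∀ k, ∀ t ∈ A, AEStronglyMeasurable (F k t) μ)
    (hs : ∀ k, ∀ t ∈ A, ∀ x ∈ s k, F k t x = f t x)
    (h : ∀ k, ∀ t ∈ A, ∀ x, |F k t x - f t x| ≤ C * e t x) :
    TendstoUniformlyOn (fun k t => ∫ x, F k t x ∂μ) (fun t => ∫ x, f t x ∂μ) l A := by
  rw [Metric.tendstoUniformlyOn_iff] at htail ⊢
  intro ε hε
  filter_upwards [htail (ε / (|C| + 1)) (by positivity)] with k hk t ht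
  have hkt := hk t ht
  rw [Pi.zero_apply, dist_zero_left, Real.norm_eq_abs, lt_div_iff₀ (by positivity)] at hkt
  rw [dist_comm, Real.dist_eq]
  calc |(∫ x, F k t x ∂μ) - ∫ x, f t x ∂μ|
      ≤ C * ∫ x in (s k)ᶜ, e t x ∂μ :=
        abs_integral_sub_le_setIntegral_compl (hF k t ht) (hf t ht) (he t ht) (hs k t ht) (h k t ht)
    _ ≤ |∫ x in (s k)ᶜ, e t x ∂μ| * |C| := by
        rw [← abs_mul, mul_comm]
        exact le_abs_self _
    _ ≤ |∫ x in (s k)ᶜ, e t x ∂μ| * (|C| + 1) := by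
        gcongr
        exact le_add_of_nonneg_right zero_le_one
    _ < ε := hkt

-- Dini's theorem applies to the integrals over balls, which increase to the whole integral.
lemma tendstoUniformlyOn_setIntegral_compl_closedBall {α : Type*} [PseudoMetricSpace α]
    [PseudoMetricSpace X] [ProperSpace X] [OpensMeasurableSpace X] [IsLocallyFiniteMeasure μ]
    {A : Set α} (hA : IsCompact A) {e : α → X → ℝ} (x₀ : X)
    (hnonneg : ∀ t ∈ A, ∀ x, 0 ≤ e t x)
    (hcont : ContinuousOn (fun p : α × X => e p.1 p.2) (A ×ˢ Set.univ))
    (hint : ∀ t ∈ A, Integrable (e t) μ) (htotal : ContinuousOn (fun t => ∫ x, e t x ∂μ) A) :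
    TendstoUniformlyOn (fun (k : ℕ) t => ∫ x in (Metric.closedBall x₀ (k : ℝ))ᶜ, e t x ∂μ) 0
      atTop A := by
  have hmono : Monotone fun k : ℕ => Metric.closedBall x₀ (k : ℝ) := fun i j hij =>
    Metric.closedBall_subset_closedBall (Nat.cast_le.2 hij)
  have hmeas (k : ℕ) : MeasurableSet (Metric.closedBall x₀ (k : ℝ)) :=
    Metric.isClosed_closedBall.measurableSet
  have hballs : TendstoUniformlyOn (fun (k : ℕ) t => ∫ x in Metric.closedBall x₀ (k : ℝ), e t x ∂μ)
      (fun t => ∫ x, e t x ∂μ) atTop A := by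
    refine Monotone.tendstoUniformlyOn_of_forall_tendsto hA (fun k => ?_)
      (fun t ht i j hij => ?_) htotal fun t ht => ?_
    · have := isCompact_iff_compactSpace.1 hA
      rw [continuousOn_iff_continuous_domRestrict]
      refine continuous_parametric_integral_of_continuous (X := A) (f := fun t x => e t x) ?_
        (isCompact_closedBall x₀ (k : ℝ))
      exact hcont.comp_continuous (f := fun p : A × X => ((p.1 : α), p.2)) (by fun_prop)
        fun p => ⟨p.1.2, trivial⟩
    · exact setIntegral_mono_set (hint t ht).integrableOn (ae_of_all _ (hnonneg t ht))
        (hmono hij).eventuallyLE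
    · simpa only [Metric.iUnion_closedBall_nat, setIntegral_univ] using
        tendsto_setIntegral_of_monotone hmeas hmono (hint t ht).integrableOn
  rw [Metric.tendstoUniformlyOn_iff] at hballs ⊢
  intro ε hε
  filter_upwards [hballs ε hε] with k hk t ht
  simpa [← integral_add_compl (hmeas k) (hint t ht), Real.dist_eq] using hk t ht

end UniformTails

section TimeDerivative

lemma hasDerivAt_integral_mul_of_hasCompactSupport {X : Type*} [TopologicalSpace X]
    [MeasurableSpace X] [OpensMeasurableSpace X] {μ : Measure X} [IsFiniteMeasureOnCompacts μ]
    {J : Set ℝ} (hJ : IsOpen J) {g g' : ℝ → X → ℝ} {ψ : X → ℝ}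
    (hg : ∀ t ∈ J, Continuous (g t))
    (hg' : ContinuousOn (fun p : ℝ × X => g' p.1 p.2) (J ×ˢ Set.univ))
    (hderiv : ∀ t ∈ J, ∀ x, HasDerivAt (fun τ => g τ x) (g' t x) t)
    (hψ : Continuous ψ) (hψc : HasCompactSupport ψ) {t : ℝ} (ht : t ∈ J) :
    HasDerivAt (fun τ => ∫ x, g τ x * ψ x ∂μ) (∫ x, g' t x * ψ x ∂μ) t := by
  have hint {h : X → ℝ} (hh : Continuous h) : Integrable (fun x => h x * ψ x) μ :=
    (hh.mul hψ).integrable_of_hasCompactSupport hψc.mul_left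
  have hg't : Continuous (g' t) :=
    hg'.comp_continuous (f := fun x => (t, x)) (by fun_prop) fun x => ⟨ht, trivial⟩
  obtain ⟨A, hA, hAJ, hAc⟩ := local_compact_nhds (hJ.mem_nhds ht)
  obtain ⟨C, hC⟩ := (hAc.prod hψc.isCompact).exists_bound_of_continuousOn
    (hg'.mono (Set.prod_mono hAJ (Set.subset_univ _)))
  refine (hasDerivAt_integral_of_dominated_loc_of_deriv_le (F' := fun τ x => g' τ x * ψ x)
    (bound := fun x => C * ‖ψ x‖) hA ?_ (hint (hg t ht)) (hint hg't).1
    (ae_of_all _ fun x τ hτ => ?_)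
    ((hψ.integrable_of_hasCompactSupport hψc).norm.const_mul C)
    (ae_of_all _ fun x τ hτ => (hderiv τ (hAJ hτ) x).mul_const _)).2
  · filter_upwards [hJ.mem_nhds ht] with τ hτ using (hint (hg τ hτ)).1
  · by_cases hx : x ∈ tsupport ψ
    · rw [norm_mul]
      exact mul_le_mul_of_nonneg_right (hC (τ, x) ⟨hτ, hx⟩) (norm_nonneg _)
    · simp [image_eq_zero_of_notMem_tsupport hx]

variable {E V : Type*} [NormedAddCommGroup E] [NormedSpace ℝ E] [NormedAddCommGroup V]
  [NormedSpace ℝ V] {J : Set ℝ}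

lemma contDiff_slice {f : ℝ → E → V}
    (hf : ContDiffOn ℝ 1 (fun p : ℝ × E => f p.1 p.2) (J ×ˢ Set.univ)) {t : ℝ} (ht : t ∈ J) :
    ContDiff ℝ 1 (f t) := by
  rw [← contDiffOn_univ]
  exact hf.comp (f := fun x => (t, x)) (by fun_prop) fun x _ => ⟨ht, trivial⟩

lemma hasDerivAt_slice {f : ℝ → E → V} {t : ℝ} {x : E}
    (hf : DifferentiableAt ℝ (fun p : ℝ × E => f p.1 p.2) (t, x)) :
    HasDerivAt (fun τ => f τ x) (fderiv ℝ (fun p : ℝ × E => f p.1 p.2) (t, x) (1, 0)) t :=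
  HasFDerivAt.comp_hasDerivAt (l := fun p : ℝ × E => f p.1 p.2) t hf.hasFDerivAt
    ((hasDerivAt_id t).prodMk (hasDerivAt_const t x))

lemma hasFDerivAt_slice {f : ℝ → E → V} {t : ℝ} {x : E}
    (hf : DifferentiableAt ℝ (fun p : ℝ × E => f p.1 p.2) (t, x)) :
    HasFDerivAt (f t) ((fderiv ℝ (fun p : ℝ × E => f p.1 p.2) (t, x)).comp
      (ContinuousLinearMap.inr ℝ ℝ E)) x :=
  hf.hasFDerivAt.comp x (hasFDerivAt_prodMk_right t x)

lemma continuousOn_deriv_slice (hJ : IsOpen J) {f : ℝ → E → V}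
    (hf : ContDiffOn ℝ 1 (fun p : ℝ × E => f p.1 p.2) (J ×ˢ Set.univ)) :
    ContinuousOn (fun p : ℝ × E => deriv (fun τ => f τ p.2) p.1) (J ×ˢ Set.univ) :=
  have hopen : IsOpen (J ×ˢ (Set.univ : Set E)) := hJ.prod isOpen_univ
  ((hf.continuousOn_fderiv_of_isOpen hopen le_rfl).clm_apply continuousOn_const).congr
    fun p hp => (hasDerivAt_slice (f := f) (x := p.2)
      ((hf.differentiableOn one_ne_zero).differentiableAt (hopen.mem_nhds hp))).deriv

end TimeDerivative

section BalanceLaw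

variable {E : Type*} [NormedAddCommGroup E] [NormedSpace ℝ E] [FiniteDimensional ℝ E]
  [MeasurableSpace E] [BorelSpace E] {μ : Measure E}
  {J : Set ℝ} {e f s : ℝ → E → ℝ} {q : ℝ → E → E} {C t : ℝ}

lemma tendstoUniformlyOn_integral_mul_cutoff (he : ∀ t ∈ J, Integrable (e t) μ)
    (htail : TendstoUniformlyOn
      (fun (k : ℕ) t => ∫ x in (Metric.closedBall (0 : E) (k : ℝ))ᶜ, e t x ∂μ) 0 atTop J)
    (hf : ∀ t ∈ J, Continuous (f t)) (hfe : ∀ t ∈ J, ∀ x, |f t x| ≤ C * e t x) :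
    TendstoUniformlyOn (fun k t => ∫ x, f t x * cutoff k x ∂μ) (fun t => ∫ x, f t x ∂μ)
      atTop J :=
  tendstoUniformlyOn_integral_of_eqOn htail he
    (fun t ht => ((he t ht).const_mul C).mono' (hf t ht).aestronglyMeasurable
      (ae_of_all _ (hfe t ht)))
    (fun k t ht => ((hf t ht).mul (contDiff_cutoff k).continuous).aestronglyMeasurable)
    (fun k t _ x hx => by rw [cutoff_eq_one hx, mul_one])
    (fun k t ht x => (abs_mul_cutoff_sub_le k x _).trans (hfe t ht x))

lemma tendstoUniformlyOn_integral_fderiv_cutoff (he : ∀ t ∈ J, Integrable (e t) μ)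
    (htail : TendstoUniformlyOn
      (fun (k : ℕ) t => ∫ x in (Metric.closedBall (0 : E) (k : ℝ))ᶜ, e t x ∂μ) 0 atTop J)
    (hq : ∀ t ∈ J, Continuous (q t)) (hqe : ∀ t ∈ J, ∀ x, ‖q t x‖ ≤ (1 + ‖x‖) * (C * e t x)) :
    TendstoUniformlyOn (fun k t => ∫ x, fderiv ℝ (cutoff k) x (q t x) ∂μ) 0 atTop J := by
  obtain ⟨K, hK⟩ := exists_one_add_norm_mul_norm_fderiv_cutoff_le (E := E)
  have hbound (k : ℕ) (t : ℝ) (ht : t ∈ J) (x : E) :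
      |fderiv ℝ (cutoff k) x (q t x)| ≤ K * C * e t x :=
    have hCe : 0 ≤ C * e t x :=
      nonneg_of_mul_nonneg_right ((norm_nonneg _).trans (hqe t ht x)) (by positivity)
    calc |fderiv ℝ (cutoff k) x (q t x)|
        ≤ ‖fderiv ℝ (cutoff k) x‖ * ((1 + ‖x‖) * (C * e t x)) :=
          ((fderiv ℝ (cutoff k) x).le_opNorm _).trans
            (mul_le_mul_of_nonneg_left (hqe t ht x) (norm_nonneg _))
      _ = (1 + ‖x‖) * ‖fderiv ℝ (cutoff k) x‖ * (C * e t x) := by ring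
      _ ≤ K * (C * e t x) := by gcongr; exact hK k x
      _ = K * C * e t x := (mul_assoc ..).symm
  have hlim := tendstoUniformlyOn_integral_of_eqOn (f := fun _ _ => 0) htail he
    (fun _ _ => integrable_zero _ _ _)
    (fun k t ht => (((contDiff_cutoff k).continuous_fderiv one_ne_zero).clm_apply
      (hq t ht)).aestronglyMeasurable)
    (fun k t _ x hx => by rw [fderiv_cutoff_eq_zero hx, zero_apply])
    (fun k t ht x => by simpa only [sub_zero] using hbound k t ht x)
  exact hlim.congr_right fun t _ => integral_zero _ _

variable [μ.IsAddHaarMeasure]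

lemma hasDerivAt_integral_mul_of_balanceLaw (hJ : IsOpen J)
    (hf : ContDiffOn ℝ 1 (fun p : ℝ × E => f p.1 p.2) (J ×ˢ Set.univ))
    (hq : ∀ t ∈ J, ContDiff ℝ 1 (q t)) (hs : ∀ t ∈ J, Continuous (s t))
    (hlaw : ∀ t ∈ J, ∀ x, deriv (fun τ => f τ x) t + divergence (q t) x = s t x)
    {ψ : E → ℝ} (hψ : ContDiff ℝ 1 ψ) (hψc : HasCompactSupport ψ) (ht : t ∈ J) :
    HasDerivAt (fun τ => ∫ x, f τ x * ψ x ∂μ)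
      ((∫ x, s t x * ψ x ∂μ) + ∫ x, fderiv ℝ ψ x (q t x) ∂μ) t := by
  have hsource : Integrable (fun x => s t x * ψ x) μ :=
    ((hs t ht).mul hψ.continuous).integrable_of_hasCompactSupport hψc.mul_left
  have hdiv : Integrable (fun x => ψ x * divergence (q t) x) μ :=
    (hψ.continuous.mul (continuous_divergence (hq t ht))).integrable_of_hasCompactSupport
      hψc.mul_right
  refine (hasDerivAt_integral_mul_of_hasCompactSupport hJ
    (fun τ hτ => (contDiff_slice hf hτ).continuous)
    (continuousOn_deriv_slice hJ hf)
    (fun τ hτ x => (hasDerivAt_slice ((hf.differentiableOn one_ne_zero).differentiableAt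
      ((hJ.prod isOpen_univ).mem_nhds ⟨hτ, trivial⟩))).differentiableAt.hasDerivAt)
    hψ.continuous hψc ht).congr_deriv ?_
  calc ∫ x, deriv (fun τ => f τ x) t * ψ x ∂μ
      = ∫ x, (s t x * ψ x - ψ x * divergence (q t) x) ∂μ :=
        integral_congr_ae <| ae_of_all _ fun x => by linear_combination ψ x * hlaw t ht x
    _ = (∫ x, s t x * ψ x ∂μ) + ∫ x, fderiv ℝ ψ x (q t x) ∂μ := by
        rw [integral_sub hsource hdiv, integral_mul_divergence_eq_neg hψ hψc (hq t ht),
          sub_neg_eq_add]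

lemma hasDerivAt_integral_of_balanceLaw (hJ : IsOpen J)
    (hf : ContDiffOn ℝ 1 (fun p : ℝ × E => f p.1 p.2) (J ×ˢ Set.univ))
    (hq : ∀ t ∈ J, ContDiff ℝ 1 (q t)) (hs : ∀ t ∈ J, Continuous (s t))
    (hlaw : ∀ t ∈ J, ∀ x, deriv (fun τ => f τ x) t + divergence (q t) x = s t x)
    (he : ∀ t ∈ J, Integrable (e t) μ)
    (htail : TendstoUniformlyOn
      (fun (k : ℕ) t => ∫ x in (Metric.closedBall (0 : E) (k : ℝ))ᶜ, e t x ∂μ) 0 atTop J)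
    (hfe : ∀ t ∈ J, ∀ x, |f t x| ≤ C * e t x) (hse : ∀ t ∈ J, ∀ x, |s t x| ≤ C * e t x)
    (hqe : ∀ t ∈ J, ∀ x, ‖q t x‖ ≤ (1 + ‖x‖) * (C * e t x)) (ht : t ∈ J) :
    HasDerivAt (fun τ => ∫ x, f τ x ∂μ) (∫ x, s t x ∂μ) t := by
  have hdensity := tendstoUniformlyOn_integral_mul_cutoff he htail
    (fun τ hτ => (contDiff_slice hf hτ).continuous) hfe
  have hsource := tendstoUniformlyOn_integral_mul_cutoff he htail hs hse
  have hflux := tendstoUniformlyOn_integral_fderiv_cutoff he htail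
    (fun τ hτ => (hq τ hτ).continuous) hqe
  rw [← add_zero (∫ x, s t x ∂μ)]
  exact hasDerivAt_of_tendstoUniformlyOn hJ (hsource.add hflux)
    (Eventually.of_forall fun k τ hτ => hasDerivAt_integral_mul_of_balanceLaw hJ hf hq hs hlaw
      (contDiff_cutoff k) (hasCompactSupport_cutoff k) hτ)
    (fun τ hτ => hdensity.tendsto_at hτ) ht

end BalanceLaw

lemma antitoneOn_div_rpow_of_mul_deriv_le {D : Set ℝ} (hD : Convex ℝ D) {a c : ℝ} {J J' : ℝ → ℝ}
    (hpos : ∀ t ∈ D, 0 < t + c) (hJ : ContinuousOn J D)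
    (hderiv : ∀ t ∈ interior D, HasDerivAt J (J' t) t)
    (hle : ∀ t ∈ interior D, (t + c) * J' t ≤ a * J t) :
    AntitoneOn (fun t => J t / (t + c) ^ a) D := by
  have hpow (t : ℝ) (ht : t ∈ D) : 0 < (t + c) ^ a := Real.rpow_pos_of_pos (hpos t ht) a
  refine antitoneOn_of_hasDerivWithinAt_nonpos hD
    (hJ.div (ContinuousOn.rpow_const (by fun_prop) fun t ht => Or.inl (hpos t ht).ne')
      fun t ht => (hpow t ht).ne')
    (fun t ht => ((hderiv t ht).fun_div
      (((hasDerivAt_id t).add_const c).rpow_const (Or.inl (hpos t (interior_subset ht)).ne'))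
      (hpow t (interior_subset ht)).ne').hasDerivWithinAt) fun t ht => ?_
  have htc := hpos t (interior_subset ht)
  refine div_nonpos_of_nonpos_of_nonneg ?_ (sq_nonneg _)
  calc J' t * (t + c) ^ a - J t * (1 * a * (t + c) ^ (a - 1))
      = ((t + c) * J' t - a * J t) * ((t + c) ^ a / (t + c)) := by
        rw [Real.rpow_sub_one htc.ne']
        field_simp
    _ ≤ 0 := mul_nonpos_of_nonpos_of_nonneg (sub_nonpos.2 (hle t ht))
        (div_pos (hpow t (interior_subset ht)) htc).le

namespace IsentropicEulerSolution

variable {n : ℕ} {γ T : ℝ} (S : IsentropicEulerSolution n γ T)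

local notation "𝔼" => EuclideanSpace ℝ (Fin n)

section MaterialDerivative

/-- The derivative `∂ₜf + u · ∇f` of `f` along the flow, encoded as the directional derivative
of `f` on space-time in the direction `(1, u)`. -/
def materialDeriv {V : Type*} [NormedAddCommGroup V] [NormedSpace ℝ V] (f : ℝ → 𝔼 → V) (t : ℝ)
    (x : 𝔼) : V :=
  fderiv ℝ (fun p : ℝ × 𝔼 => f p.1 p.2) (t, x) (1, S.u t x)

/-- The pressure `ρ^γ`. -/
def pressure (t : ℝ) (x : 𝔼) : ℝ := S.ρ t x ^ γ

variable {t : ℝ}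

lemma contDiff_ρ (ht : t ∈ Set.Icc 0 T) : ContDiff ℝ 1 (S.ρ t) := contDiff_slice S.smooth_ρ ht

lemma contDiff_u (ht : t ∈ Set.Icc 0 T) : ContDiff ℝ 1 (S.u t) := contDiff_slice S.smooth_u ht

lemma contDiff_pressure (hγ : 1 < γ) (ht : t ∈ Set.Icc 0 T) : ContDiff ℝ 1 (S.pressure t) :=
  (Real.contDiff_rpow_const_of_le (n := 1) (by simpa using hγ.le)).comp (S.contDiff_ρ ht)

lemma differentiableAt_ρ (ht : t ∈ Set.Ioo 0 T) (x : 𝔼) :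
    DifferentiableAt ℝ (fun p : ℝ × 𝔼 => S.ρ p.1 p.2) (t, x) :=
  (S.smooth_ρ.differentiableOn one_ne_zero).differentiableAt
    (prod_mem_nhds (Icc_mem_nhds ht.1 ht.2) univ_mem)

lemma differentiableAt_u (ht : t ∈ Set.Ioo 0 T) (x : 𝔼) :
    DifferentiableAt ℝ (fun p : ℝ × 𝔼 => S.u p.1 p.2) (t, x) :=
  (S.smooth_u.differentiableOn one_ne_zero).differentiableAt
    (prod_mem_nhds (Icc_mem_nhds ht.1 ht.2) univ_mem)

lemma deriv_add_divergence_smul_u (ht : t ∈ Set.Ioo 0 T) (x : 𝔼) {f : ℝ → 𝔼 → ℝ}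
    (hf : DifferentiableAt ℝ (fun p : ℝ × 𝔼 => f p.1 p.2) (t, x)) :
    deriv (fun τ => f τ x) t + divergence (fun y => f t y • S.u t y) x =
      S.materialDeriv f t x + f t x * divergence (S.u t) x := by
  have hsplit : ((1 : ℝ), S.u t x) = (1, 0) + (0, S.u t x) := by simp
  have hft := hasFDerivAt_slice hf
  rw [(hasDerivAt_slice hf).deriv, divergence_smul hft.differentiableAt
    ((S.contDiff_u (Set.Ioo_subset_Icc_self ht)).differentiable one_ne_zero x), hft.fderiv,
    materialDeriv, hsplit, map_add]
  simp only [ContinuousLinearMap.comp_apply, ContinuousLinearMap.inr_apply]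
  ring

lemma materialDeriv_ρ (ht : t ∈ Set.Ioo 0 T) (x : 𝔼) :
    S.materialDeriv S.ρ t x = -(S.ρ t x * divergence (S.u t) x) := by
  have ht' := Set.Ioo_subset_Icc_self ht
  have hsum : divergence (fun y => S.ρ t y • S.u t y) x =
      ∑ i, fderiv ℝ (fun y => S.ρ t y * S.u t y i) x (EuclideanSpace.single i 1) :=
    divergence_eq_sum_fderiv (((S.contDiff_ρ ht').smul (S.contDiff_u ht')).differentiable
      one_ne_zero x)
  linear_combination S.mass_eq t ht' x + hsum -
    S.deriv_add_divergence_smul_u ht x (S.differentiableAt_ρ ht x)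

lemma deriv_add_divergence_ρ_mul_smul_u (ht : t ∈ Set.Ioo 0 T) (x : 𝔼) {g : ℝ → 𝔼 → ℝ}
    (hg : DifferentiableAt ℝ (fun p : ℝ × 𝔼 => g p.1 p.2) (t, x)) :
    deriv (fun τ => S.ρ τ x * g τ x) t + divergence (fun y => (S.ρ t y * g t y) • S.u t y) x =
      S.ρ t x * S.materialDeriv g t x := by
  have hρ := S.differentiableAt_ρ ht x
  have hmul : S.materialDeriv (fun τ y => S.ρ τ y * g τ y) t x =
      S.ρ t x * S.materialDeriv g t x + g t x * S.materialDeriv S.ρ t x := by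
    simp [materialDeriv, fderiv_fun_mul hρ hg]
  rw [S.deriv_add_divergence_smul_u ht x (f := fun τ y => S.ρ τ y * g τ y) (hρ.fun_mul hg), hmul,
    S.materialDeriv_ρ ht x]
  ring

lemma ρ_mul_inner_materialDeriv_u (ht : t ∈ Set.Ioo 0 T) (x : 𝔼) (v : 𝔼) :
    S.ρ t x * ⟪S.materialDeriv S.u t x, v⟫_ℝ = -fderiv ℝ (S.pressure t) x v := by
  have ht' := Set.Ioo_subset_Icc_self ht
  have hu := S.differentiableAt_u ht x
  have hcoord (i : Fin n) : S.ρ t x * S.materialDeriv S.u t x i =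
      -fderiv ℝ (S.pressure t) x (EuclideanSpace.single i 1) := by
    have hi : HasFDerivAt (fun p : ℝ × 𝔼 => S.u p.1 p.2 i) _ (t, x) :=
      (EuclideanSpace.proj (𝕜 := ℝ) i).hasFDerivAt.comp (t, x) hu.hasFDerivAt
    have hmat : S.materialDeriv (fun τ y => S.u τ y i) t x = S.materialDeriv S.u t x i := by
      simp [materialDeriv, hi.fderiv]
    have huc : ContDiff ℝ 1 fun y => S.u t y i :=
      (EuclideanSpace.proj (𝕜 := ℝ) i).contDiff.comp (S.contDiff_u ht')
    have hsum : divergence (fun y => (S.ρ t y * S.u t y i) • S.u t y) x =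
        ∑ j, fderiv ℝ (fun y => S.ρ t y * S.u t y i * S.u t y j) x (EuclideanSpace.single j 1) :=
      divergence_eq_sum_fderiv
        ((((S.contDiff_ρ ht').mul huc).smul (S.contDiff_u ht')).differentiable one_ne_zero x)
    have hlaw := S.deriv_add_divergence_ρ_mul_smul_u ht x (g := fun τ y => S.u τ y i)
      hi.differentiableAt
    have hmom : _ + _ + fderiv ℝ (S.pressure t) x (EuclideanSpace.single i 1) = 0 :=
      S.momentum_eq t ht' x i
    rw [hmat] at hlaw
    linear_combination hmom + hsum - hlaw
  have hfun : S.ρ t x • innerSL ℝ (S.materialDeriv S.u t x) = -fderiv ℝ (S.pressure t) x := by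
    refine ContinuousLinearMap.coe_injective
      ((EuclideanSpace.basisFun (Fin n) ℝ).toBasis.ext fun i => ?_)
    simpa [EuclideanSpace.inner_single_right] using hcoord i
  simpa using DFunLike.congr_fun hfun v

lemma materialDeriv_pressure (ht : t ∈ Set.Ioo 0 T) (x : 𝔼) (hγ : 1 < γ) :
    S.materialDeriv S.pressure t x = -(γ * S.pressure t x * divergence (S.u t) x) := by
  have hρ : S.ρ t x ^ (γ - 1) * S.ρ t x = S.ρ t x ^ γ := by
    rw [← Real.rpow_add_one' (S.ρ_nonneg t (Set.Ioo_subset_Icc_self ht) x) (by linarith),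
      sub_add_cancel]
  have hchain : S.materialDeriv S.pressure t x =
      γ * S.ρ t x ^ (γ - 1) * S.materialDeriv S.ρ t x := by
    have h := (S.differentiableAt_ρ ht x).hasFDerivAt.rpow_const (p := γ) (Or.inr hγ.le)
    simp [materialDeriv, pressure, h.fderiv]
  rw [hchain, S.materialDeriv_ρ ht x, pressure, ← hρ]
  ring

lemma materialDeriv_position : S.materialDeriv (fun _ y => y) t = S.u t := by
  funext x
  simp [materialDeriv, fderiv_snd]

lemma materialDeriv_inner {f g : ℝ → 𝔼 → 𝔼} {x : 𝔼}
    (hf : DifferentiableAt ℝ (fun p : ℝ × 𝔼 => f p.1 p.2) (t, x))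
    (hg : DifferentiableAt ℝ (fun p : ℝ × 𝔼 => g p.1 p.2) (t, x)) :
    S.materialDeriv (fun τ y => ⟪f τ y, g τ y⟫_ℝ) t x =
      ⟪S.materialDeriv f t x, g t x⟫_ℝ + ⟪f t x, S.materialDeriv g t x⟫_ℝ := by
  rw [materialDeriv, fderiv_inner_apply ℝ hf hg, add_comm]
  rfl

lemma materialDeriv_norm_sq {f : ℝ → 𝔼 → 𝔼} {x : 𝔼}
    (hf : DifferentiableAt ℝ (fun p : ℝ × 𝔼 => f p.1 p.2) (t, x)) :
    S.materialDeriv (fun τ y => ‖f τ y‖ ^ 2) t x = 2 * ⟪S.materialDeriv f t x, f t x⟫_ℝ := by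
  simp_rw [← real_inner_self_eq_norm_sq]
  rw [S.materialDeriv_inner hf hf, real_inner_comm]
  ring

end MaterialDerivative

section BalanceLaws

/-- The energy density `½ρ|u|² + ρ^γ/(γ-1)`. -/
def energyDensity (t : ℝ) (x : 𝔼) : ℝ :=
  (1 / 2 : ℝ) * S.ρ t x * ‖S.u t x‖ ^ 2 + S.ρ t x ^ γ / (γ - 1)

/-- The flux `(½ρ|u|² + γρ^γ/(γ-1))u` of the energy, written as energy density plus pressure. -/
def energyFlux (t : ℝ) (x : 𝔼) : 𝔼 := (S.energyDensity t x + S.pressure t x) • S.u t x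

/-- The flux `ρ(u·x)u + ρ^γ x` of the virial density `ρ u·x`. -/
def virialFlux (t : ℝ) (x : 𝔼) : 𝔼 :=
  (S.ρ t x * ⟪S.u t x, x⟫_ℝ) • S.u t x + S.pressure t x • x

variable {t : ℝ}

lemma contDiff_energyDensity (hγ : 1 < γ) (ht : t ∈ Set.Icc 0 T) :
    ContDiff ℝ 1 (S.energyDensity t) :=
  ((contDiff_const.mul (S.contDiff_ρ ht)).mul ((S.contDiff_u ht).norm_sq ℝ)).add
    ((S.contDiff_pressure hγ ht).div_const _)

lemma contDiff_energyFlux (hγ : 1 < γ) (ht : t ∈ Set.Icc 0 T) : ContDiff ℝ 1 (S.energyFlux t) :=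
  ((S.contDiff_energyDensity hγ ht).add (S.contDiff_pressure hγ ht)).smul (S.contDiff_u ht)

lemma contDiff_virialFlux (hγ : 1 < γ) (ht : t ∈ Set.Icc 0 T) : ContDiff ℝ 1 (S.virialFlux t) :=
  (((S.contDiff_ρ ht).mul ((S.contDiff_u ht).inner ℝ contDiff_id)).smul (S.contDiff_u ht)).add
    ((S.contDiff_pressure hγ ht).smul contDiff_id)

lemma inertia_balance (ht : t ∈ Set.Ioo 0 T) (x : 𝔼) :
    deriv (fun τ => S.ρ τ x * ‖x‖ ^ 2) t
        + divergence (fun y => (S.ρ t y * ‖y‖ ^ 2) • S.u t y) x =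
      2 * (S.ρ t x * ⟪S.u t x, x⟫_ℝ) := by
  rw [S.deriv_add_divergence_ρ_mul_smul_u ht x (g := fun _ y => ‖y‖ ^ 2)
      (differentiableAt_snd.norm_sq ℝ),
    S.materialDeriv_norm_sq (f := fun _ y => y) differentiableAt_snd, materialDeriv_position]
  ring

lemma virial_balance (hγ : 1 < γ) (ht : t ∈ Set.Ioo 0 T) (x : 𝔼) :
    deriv (fun τ => S.ρ τ x * ⟪S.u τ x, x⟫_ℝ) t + divergence (S.virialFlux t) x =
      S.ρ t x * ‖S.u t x‖ ^ 2 + n * S.pressure t x := by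
  have ht' := Set.Ioo_subset_Icc_self ht
  have hu := S.differentiableAt_u ht x
  have hp := (S.contDiff_pressure hγ ht').differentiable one_ne_zero x
  have hconv : DifferentiableAt ℝ (fun y => (S.ρ t y * ⟪S.u t y, y⟫_ℝ) • S.u t y) x :=
    (((S.contDiff_ρ ht').mul ((S.contDiff_u ht').inner ℝ contDiff_id)).smul
      (S.contDiff_u ht')).differentiable one_ne_zero x
  have hlaw := S.deriv_add_divergence_ρ_mul_smul_u ht x (g := fun τ y => ⟪S.u τ y, y⟫_ℝ)
    (hu.inner ℝ differentiableAt_snd)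
  rw [S.materialDeriv_inner (g := fun _ y => y) hu differentiableAt_snd, materialDeriv_position,
    real_inner_self_eq_norm_sq] at hlaw
  have hflux : divergence (S.virialFlux t) x =
      divergence (fun y => (S.ρ t y * ⟪S.u t y, y⟫_ℝ) • S.u t y) x
        + (fderiv ℝ (S.pressure t) x x + n * S.pressure t x) := by
    unfold virialFlux
    rw [divergence_add hconv (hp.fun_smul differentiableAt_fun_id),
      divergence_smul hp differentiableAt_fun_id, divergence_id, finrank_euclideanSpace_fin]
    ring
  linear_combination hlaw + hflux + S.ρ_mul_inner_materialDeriv_u ht x x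

lemma differentiableAt_energyDensity (hγ : 1 < γ) (ht : t ∈ Set.Ioo 0 T) (x : 𝔼) :
    DifferentiableAt ℝ (fun p : ℝ × 𝔼 => S.energyDensity p.1 p.2) (t, x) := by
  have hρ := S.differentiableAt_ρ ht x
  have hu := (S.differentiableAt_u ht x).norm_sq ℝ
  have hp := hρ.rpow_const (p := γ) (Or.inr hγ.le)
  unfold energyDensity
  fun_prop

lemma materialDeriv_energyDensity (hγ : 1 < γ) (ht : t ∈ Set.Ioo 0 T) (x : 𝔼) :
    S.materialDeriv S.energyDensity t x =
      -((S.energyDensity t x + S.pressure t x) * divergence (S.u t) x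
        + fderiv ℝ (S.pressure t) x (S.u t x)) := by
  have hρ := S.differentiableAt_ρ ht x
  have hleibniz : S.materialDeriv S.energyDensity t x =
      1 / 2 * (S.materialDeriv S.ρ t x * ‖S.u t x‖ ^ 2
        + S.ρ t x * S.materialDeriv (fun τ y => ‖S.u τ y‖ ^ 2) t x)
        + S.materialDeriv S.pressure t x / (γ - 1) := by
    have h := ((hρ.hasFDerivAt.const_mul (1 / 2)).fun_mul
      ((S.differentiableAt_u ht x).norm_sq ℝ).hasFDerivAt).fun_add
      ((hρ.rpow_const (p := γ) (Or.inr hγ.le)).hasFDerivAt.mul_const (γ - 1)⁻¹)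
    simp only [← div_eq_mul_inv] at h
    simp only [materialDeriv, energyDensity, h.fderiv, pressure, add_apply, smul_apply, smul_eq_mul]
    ring
  have hdensity : S.energyDensity t x =
      1 / 2 * S.ρ t x * ‖S.u t x‖ ^ 2 + S.pressure t x / (γ - 1) := rfl
  have hγ' : γ - 1 ≠ 0 := by linarith
  rw [hleibniz, S.materialDeriv_norm_sq (S.differentiableAt_u ht x), S.materialDeriv_ρ ht x,
    S.materialDeriv_pressure ht x hγ, hdensity]
  field_simp
  linear_combination 2 * (γ - 1) * S.ρ_mul_inner_materialDeriv_u ht x (S.u t x)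

lemma energy_balance (hγ : 1 < γ) (ht : t ∈ Set.Ioo 0 T) (x : 𝔼) :
    deriv (fun τ => S.energyDensity τ x) t + divergence (S.energyFlux t) x = 0 := by
  have ht' := Set.Ioo_subset_Icc_self ht
  have hE := (S.contDiff_energyDensity hγ ht').differentiable one_ne_zero x
  have hp := (S.contDiff_pressure hγ ht').differentiable one_ne_zero x
  have hu := (S.contDiff_u ht').differentiable one_ne_zero x
  have hlaw := S.deriv_add_divergence_smul_u ht x (S.differentiableAt_energyDensity hγ ht x)
  rw [S.materialDeriv_energyDensity hγ ht] at hlaw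
  have hflux : divergence (S.energyFlux t) x =
      divergence (fun y => S.energyDensity t y • S.u t y) x
        + (S.pressure t x * divergence (S.u t) x + fderiv ℝ (S.pressure t) x (S.u t x)) := by
    unfold energyFlux
    simp_rw [add_smul]
    rw [divergence_add (hE.fun_smul hu) (hp.fun_smul hu), divergence_smul hp hu]
  linear_combination hlaw + hflux

end BalanceLaws

section TotalDensity

variable {t : ℝ}

lemma pressure_nonneg (ht : t ∈ Set.Icc 0 T) (x : 𝔼) : 0 ≤ S.pressure t x :=
  Real.rpow_nonneg (S.ρ_nonneg t ht x) γ

lemma pressure_div_nonneg (hγ : 1 < γ) (ht : t ∈ Set.Icc 0 T) (x : 𝔼) :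
    0 ≤ S.pressure t x / (γ - 1) :=
  div_nonneg (S.pressure_nonneg ht x) (sub_nonneg.2 hγ.le)

/-- The energy density plus the density `½ρ|x|²` of the moment of inertia; up to constants it
dominates the densities of all functionals of the solution. -/
def totalDensity (t : ℝ) (x : 𝔼) : ℝ :=
  S.energyDensity t x + (1 / 2 : ℝ) * (S.ρ t x * ‖x‖ ^ 2)

lemma totalDensity_eq (t : ℝ) (x : 𝔼) :
    S.totalDensity t x = 1 / 2 * (S.ρ t x * ‖S.u t x‖ ^ 2) + S.pressure t x / (γ - 1)
      + 1 / 2 * (S.ρ t x * ‖x‖ ^ 2) := by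
  rw [totalDensity, energyDensity, pressure, mul_assoc]

lemma totalDensity_nonneg (hγ : 1 < γ) (ht : t ∈ Set.Icc 0 T) (x : 𝔼) :
    0 ≤ S.totalDensity t x := by
  have hρ := S.ρ_nonneg t ht x
  have hp := S.pressure_div_nonneg hγ ht x
  rw [totalDensity_eq]
  positivity

lemma ρ_mul_norm_u_mul_norm_le (hγ : 1 < γ) (ht : t ∈ Set.Icc 0 T) (x : 𝔼) :
    S.ρ t x * (‖S.u t x‖ * ‖x‖) ≤ S.totalDensity t x := by
  rw [totalDensity_eq]
  nlinarith [mul_nonneg (S.ρ_nonneg t ht x) (sq_nonneg (‖S.u t x‖ - ‖x‖)),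
    S.pressure_div_nonneg hγ ht x]

lemma ρ_mul_norm_u_sq_le (hγ : 1 < γ) (ht : t ∈ Set.Icc 0 T) (x : 𝔼) :
    S.ρ t x * ‖S.u t x‖ ^ 2 ≤ 2 * S.totalDensity t x := by
  rw [totalDensity_eq]
  linarith [mul_nonneg (S.ρ_nonneg t ht x) (sq_nonneg ‖x‖), S.pressure_div_nonneg hγ ht x]

lemma ρ_mul_norm_sq_le (hγ : 1 < γ) (ht : t ∈ Set.Icc 0 T) (x : 𝔼) :
    S.ρ t x * ‖x‖ ^ 2 ≤ 2 * S.totalDensity t x := by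
  rw [totalDensity_eq]
  linarith [mul_nonneg (S.ρ_nonneg t ht x) (sq_nonneg ‖S.u t x‖), S.pressure_div_nonneg hγ ht x]

lemma pressure_le (hγ : 1 < γ) (ht : t ∈ Set.Icc 0 T) (x : 𝔼) :
    S.pressure t x ≤ (γ - 1) * S.totalDensity t x := by
  have hρ := S.ρ_nonneg t ht x
  rw [← div_le_iff₀' (sub_pos.2 hγ), totalDensity_eq, add_assoc, add_left_comm]
  exact le_add_of_nonneg_right (by positivity)

lemma abs_ρ_mul_inner_le (ht : t ∈ Set.Icc 0 T) (x : 𝔼) :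
    |S.ρ t x * ⟪S.u t x, x⟫_ℝ| ≤ S.ρ t x * (‖S.u t x‖ * ‖x‖) := by
  rw [abs_mul, abs_of_nonneg (S.ρ_nonneg t ht x)]
  exact mul_le_mul_of_nonneg_left (abs_real_inner_le_norm _ _) (S.ρ_nonneg t ht x)

lemma norm_inertiaFlux_le (hγ : 1 < γ) (ht : t ∈ Set.Icc 0 T) (x : 𝔼) :
    ‖(S.ρ t x * ‖x‖ ^ 2) • S.u t x‖ ≤ ‖x‖ * S.totalDensity t x := by
  have hρ := S.ρ_nonneg t ht x
  calc ‖(S.ρ t x * ‖x‖ ^ 2) • S.u t x‖ = ‖x‖ * (S.ρ t x * (‖S.u t x‖ * ‖x‖)) := by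
        rw [norm_smul, Real.norm_of_nonneg (by positivity)]
        ring
    _ ≤ ‖x‖ * S.totalDensity t x := by
        gcongr
        exact S.ρ_mul_norm_u_mul_norm_le hγ ht x

lemma norm_virialFlux_le (hγ : 1 < γ) (ht : t ∈ Set.Icc 0 T) (x : 𝔼) :
    ‖S.virialFlux t x‖ ≤ ‖x‖ * ((γ + 1) * S.totalDensity t x) :=
  calc ‖S.virialFlux t x‖
      ≤ |S.ρ t x * ⟪S.u t x, x⟫_ℝ| * ‖S.u t x‖ + S.pressure t x * ‖x‖ := by
        refine (norm_add_le _ _).trans_eq ?_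
        rw [norm_smul, norm_smul, Real.norm_eq_abs, Real.norm_of_nonneg (S.pressure_nonneg ht x)]
    _ ≤ S.ρ t x * (‖S.u t x‖ * ‖x‖) * ‖S.u t x‖ + S.pressure t x * ‖x‖ := by
        gcongr
        exact S.abs_ρ_mul_inner_le ht x
    _ = ‖x‖ * (S.ρ t x * ‖S.u t x‖ ^ 2 + S.pressure t x) := by ring
    _ ≤ ‖x‖ * ((γ + 1) * S.totalDensity t x) := by
        gcongr
        linarith [S.ρ_mul_norm_u_sq_le hγ ht x, S.pressure_le hγ ht x]

lemma integrable_energyDensity (ht : t ∈ Set.Icc 0 T) : Integrable (S.energyDensity t) := by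
  unfold energyDensity
  simp_rw [mul_assoc]
  exact ((S.int_ρu2 t ht).const_mul _).add ((S.int_ργ t ht).div_const _)

lemma integrable_totalDensity (ht : t ∈ Set.Icc 0 T) : Integrable (S.totalDensity t) :=
  (S.integrable_energyDensity ht).add ((S.int_ρx2 t ht).const_mul _)

lemma integrable_ρ_mul_inner (ht : t ∈ Set.Icc 0 T) :
    Integrable fun x => S.ρ t x * ⟪S.u t x, x⟫_ℝ :=
  (S.int_ρux t ht).mono' ((S.contDiff_ρ ht).continuous.mul
    ((S.contDiff_u ht).continuous.inner continuous_id)).aestronglyMeasurable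
    (ae_of_all _ fun x => (S.abs_ρ_mul_inner_le ht x).trans_eq (mul_assoc ..).symm)

lemma continuousOn_totalDensity (hγ : 1 < γ) :
    ContinuousOn (fun p : ℝ × 𝔼 => S.totalDensity p.1 p.2) (Set.Icc 0 T ×ˢ Set.univ) := by
  have hρ := S.smooth_ρ.continuousOn
  have hu := S.smooth_u.continuousOn
  have hp := hρ.rpow_const (p := γ) fun _ _ => Or.inr (zero_le_one.trans hγ.le)
  unfold totalDensity energyDensity
  fun_prop

lemma integral_totalDensity (ht : t ∈ Set.Icc 0 T) :
    ∫ x, S.totalDensity t x = (∫ x, S.energyDensity t x) + S.G t := by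
  unfold totalDensity G
  rw [integral_add (S.integrable_energyDensity ht) ((S.int_ρx2 t ht).const_mul _),
    integral_const_mul]

lemma continuousOn_integral_totalDensity :
    ContinuousOn (fun t => ∫ x, S.totalDensity t x) (Set.Icc 0 T) :=
  ContinuousOn.congr (fun t ht =>
    ((S.hIE t ht).continuousAt.add (S.hG t ht).continuousAt).continuousWithinAt)
    fun _ ht => S.integral_totalDensity ht

lemma tendstoUniformlyOn_setIntegral_totalDensity (hγ : 1 < γ) :
    TendstoUniformlyOn
      (fun (k : ℕ) t => ∫ x in (Metric.closedBall (0 : 𝔼) (k : ℝ))ᶜ, S.totalDensity t x) 0 atTop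
      (Set.Ioo 0 T) :=
  (tendstoUniformlyOn_setIntegral_compl_closedBall isCompact_Icc 0
    (fun _ => S.totalDensity_nonneg hγ) (S.continuousOn_totalDensity hγ)
    (fun _ => S.integrable_totalDensity) S.continuousOn_integral_totalDensity).mono
    Set.Ioo_subset_Icc_self

end TotalDensity

section Functionals

variable {t : ℝ}

lemma IE_eq_integral (ht : t ∈ Set.Icc 0 T) : S.IE t = ∫ x, S.energyDensity t x := by
  simp only [IE, Ek, I, energyDensity, mul_assoc]
  rw [integral_add ((S.int_ρu2 t ht).const_mul _) ((S.int_ργ t ht).div_const _),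
    integral_const_mul, integral_div, one_div_mul_eq_div (γ - 1)]

lemma exists_norm_u_le (ht : t ∈ Set.Icc 0 T) : ∃ B, ∀ x, ‖S.u t x‖ ≤ B := by
  obtain ⟨R, -, hR⟩ := (Metric.hasBasis_cobounded_compl_closedBall (0 : 𝔼)).eventually_iff.1
    ((S.decay_u t ht).eventually (eventually_le_nhds one_pos))
  obtain ⟨B, hB⟩ := (isCompact_closedBall (0 : 𝔼) R).exists_bound_of_continuousOn
    (S.contDiff_u ht).continuous.continuousOn
  refine ⟨max B 1, fun x => ?_⟩
  by_cases hx : x ∈ Metric.closedBall (0 : 𝔼) R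
  · exact (hB x hx).trans (le_max_left _ _)
  · exact (hR hx).trans (le_max_right _ _)

lemma integrable_energyFlux (ht : t ∈ Set.Icc 0 T) : Integrable (S.energyFlux t) := by
  obtain ⟨B, hB⟩ := S.exists_norm_u_le ht
  exact ((S.integrable_energyDensity ht).add (S.int_ργ t ht)).smul_bdd B
    (S.contDiff_u ht).continuous.aestronglyMeasurable (ae_of_all _ hB)

lemma integral_deriv_energyDensity (hγ : 1 < γ) (ht : t ∈ Set.Ioo 0 T) :
    ∫ x, deriv (fun τ => S.energyDensity τ x) t = 0 := by
  have ht' := Set.Ioo_subset_Icc_self ht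
  have hlaw : (fun x => deriv (fun τ => S.energyDensity τ x) t) =
      fun x => -divergence (S.energyFlux t) x :=
    funext fun x => eq_neg_of_add_eq_zero_left (S.energy_balance hγ ht x)
  rw [hlaw, integral_neg, neg_eq_zero]
  -- `hIE` does not assert that this derivative is integrable; if it is not, its integral is `0`.
  by_cases hdiv : Integrable (divergence (S.energyFlux t))
  · exact integral_divergence_eq_zero (S.contDiff_energyFlux hγ ht')
      (S.integrable_energyFlux ht') hdiv
  · exact integral_undef hdiv

lemma hasDerivAt_IE (hγ : 1 < γ) (ht : t ∈ Set.Ioo 0 T) : HasDerivAt S.IE 0 t :=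
  ((S.hIE t (Set.Ioo_subset_Icc_self ht)).congr_deriv
    (S.integral_deriv_energyDensity hγ ht)).congr_of_eventuallyEq <| by
    filter_upwards [Icc_mem_nhds ht.1 ht.2] with τ hτ using S.IE_eq_integral hτ

lemma hasDerivAt_G (hγ : 1 < γ) (ht : t ∈ Set.Ioo 0 T) : HasDerivAt S.G (S.F t) t := by
  have hsub (τ : ℝ) (hτ : τ ∈ Set.Ioo 0 T) : τ ∈ Set.Icc 0 T := Set.Ioo_subset_Icc_self hτ
  have hderiv : HasDerivAt (fun τ => ∫ x, S.ρ τ x * ‖x‖ ^ 2)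
      (∫ x, 2 * (S.ρ t x * ⟪S.u t x, x⟫_ℝ)) t := by
    refine hasDerivAt_integral_of_balanceLaw (C := 2) isOpen_Ioo
      (f := fun τ x => S.ρ τ x * ‖x‖ ^ 2) (s := fun τ x => 2 * (S.ρ τ x * ⟪S.u τ x, x⟫_ℝ))
      ((S.smooth_ρ.mono (Set.prod_mono_left Set.Ioo_subset_Icc_self)).mul
        (contDiff_snd.norm_sq ℝ).contDiffOn)
      (fun τ hτ => ((S.contDiff_ρ (hsub τ hτ)).mul (contDiff_norm_sq ℝ)).smul
        (S.contDiff_u (hsub τ hτ)))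
      (fun τ hτ => continuous_const.mul ((S.contDiff_ρ (hsub τ hτ)).continuous.mul
        ((S.contDiff_u (hsub τ hτ)).continuous.inner continuous_id)))
      (fun τ hτ => S.inertia_balance hτ) (fun τ hτ => S.integrable_totalDensity (hsub τ hτ))
      (S.tendstoUniformlyOn_setIntegral_totalDensity hγ) (fun τ hτ x => ?_) (fun τ hτ x => ?_)
      (fun τ hτ x => ?_) ht <;> have hρ := S.ρ_nonneg τ (hsub τ hτ) x
    · rw [abs_of_nonneg (by positivity)]
      exact S.ρ_mul_norm_sq_le hγ (hsub τ hτ) x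
    · rw [abs_mul, abs_two]
      gcongr
      exact (S.abs_ρ_mul_inner_le (hsub τ hτ) x).trans (S.ρ_mul_norm_u_mul_norm_le hγ (hsub τ hτ) x)
    · refine (S.norm_inertiaFlux_le hγ (hsub τ hτ) x).trans ?_
      have he := S.totalDensity_nonneg hγ (hsub τ hτ) x
      gcongr <;> linarith
  exact (hderiv.const_mul (1 / 2)).congr_deriv (by rw [integral_const_mul, F]; ring)

lemma hasDerivAt_F (hγ : 1 < γ) (ht : t ∈ Set.Ioo 0 T) :
    HasDerivAt S.F (2 * S.Ek t + n * (γ - 1) * S.I t) t := by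
  have hsub (τ : ℝ) (hτ : τ ∈ Set.Ioo 0 T) : τ ∈ Set.Icc 0 T := Set.Ioo_subset_Icc_self hτ
  have hγ' : 0 < γ - 1 := sub_pos.2 hγ
  have hderiv : HasDerivAt S.F (∫ x, (S.ρ t x * ‖S.u t x‖ ^ 2 + n * S.pressure t x)) t := by
    refine hasDerivAt_integral_of_balanceLaw (C := 2 + (n + 1) * (γ - 1)) isOpen_Ioo
      (f := fun τ x => S.ρ τ x * ⟪S.u τ x, x⟫_ℝ)
      (s := fun τ x => S.ρ τ x * ‖S.u τ x‖ ^ 2 + n * S.pressure τ x)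
      ((S.smooth_ρ.mul (S.smooth_u.inner ℝ contDiff_snd.contDiffOn)).mono
        (Set.prod_mono_left Set.Ioo_subset_Icc_self))
      (fun τ hτ => S.contDiff_virialFlux hγ (hsub τ hτ))
      (fun τ hτ => ((S.contDiff_ρ (hsub τ hτ)).continuous.mul
        ((S.contDiff_u (hsub τ hτ)).continuous.norm.pow 2)).add
        (continuous_const.mul (S.contDiff_pressure hγ (hsub τ hτ)).continuous))
      (fun τ hτ => S.virial_balance hγ hτ) (fun τ hτ => S.integrable_totalDensity (hsub τ hτ))
      (S.tendstoUniformlyOn_setIntegral_totalDensity hγ) (fun τ hτ x => ?_) (fun τ hτ x => ?_)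
      (fun τ hτ x => ?_) ht <;>
      have hρ := S.ρ_nonneg τ (hsub τ hτ) x <;>
      have hp := S.pressure_nonneg (hsub τ hτ) x <;>
      have he := S.totalDensity_nonneg hγ (hsub τ hτ) x
    · refine (S.abs_ρ_mul_inner_le (hsub τ hτ) x).trans <|
        (S.ρ_mul_norm_u_mul_norm_le hγ (hsub τ hτ) x).trans (le_mul_of_one_le_left he ?_)
      nlinarith
    · rw [abs_of_nonneg (by positivity)]
      linarith [S.ρ_mul_norm_u_sq_le hγ (hsub τ hτ) x, mul_nonneg hγ'.le he,
        mul_le_mul_of_nonneg_left (S.pressure_le hγ (hsub τ hτ) x) n.cast_nonneg]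
    · have hC : γ + 1 ≤ 2 + (n + 1) * (γ - 1) := by linarith [mul_nonneg n.cast_nonneg hγ'.le]
      exact (S.norm_virialFlux_le hγ (hsub τ hτ) x).trans <|
        mul_le_mul (le_add_of_nonneg_left zero_le_one) (mul_le_mul_of_nonneg_right hC he)
          (by positivity) (by positivity)
  refine hderiv.congr_deriv ?_
  unfold Ek I pressure
  rw [integral_add (S.int_ρu2 t (hsub t ht)) ((S.int_ργ t (hsub t ht)).const_mul _),
    integral_const_mul]
  field_simp

lemma hasDerivAt_IJ (hγ : 1 < γ) (ht : t ∈ Set.Ioo 0 T) :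
    HasDerivAt S.IJ ((t + 1) * (2 - n * (γ - 1)) * S.I t) t := by
  have hshift : HasDerivAt (fun τ : ℝ => τ + 1) 1 t := (hasDerivAt_id t).add_const 1
  have h : HasDerivAt S.IJ _ t :=
    ((S.hasDerivAt_G hγ ht).fun_sub (hshift.fun_mul (S.hasDerivAt_F hγ ht))).fun_add
      ((hshift.fun_pow 2).fun_mul (S.hasDerivAt_IE hγ ht))
  refine h.congr_deriv ?_
  simp only [IE]
  push_cast
  ring

lemma continuousOn_IJ : ContinuousOn S.IJ (Set.Icc 0 T) := by
  have hG : ContinuousOn S.G (Set.Icc 0 T) := fun t ht =>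
    (S.hG t ht).continuousAt.continuousWithinAt
  have hF : ContinuousOn S.F (Set.Icc 0 T) := fun t ht =>
    (S.hF t ht).continuousAt.continuousWithinAt
  have hIE : ContinuousOn S.IE (Set.Icc 0 T) :=
    ContinuousOn.congr (fun t ht => (S.hIE t ht).continuousAt.continuousWithinAt)
      fun t ht => S.IE_eq_integral ht
  unfold IJ
  fun_prop

lemma I_nonneg (hγ : 1 < γ) (ht : t ∈ Set.Icc 0 T) : 0 ≤ S.I t :=
  mul_nonneg (one_div_nonneg.2 (sub_nonneg.2 hγ.le)) (integral_nonneg (S.pressure_nonneg ht))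

lemma IJ_eq_add_integral (ht : t ∈ Set.Icc 0 T) :
    S.IJ t =
      (t + 1) ^ 2 * S.I t + 1 / 2 * ∫ x, S.ρ t x * ‖x - (t + 1) • S.u t x‖ ^ 2 := by
  have hsq (x : 𝔼) : S.ρ t x * ‖x - (t + 1) • S.u t x‖ ^ 2 =
      S.ρ t x * ‖x‖ ^ 2 - 2 * (t + 1) * (S.ρ t x * ⟪S.u t x, x⟫_ℝ)
        + (t + 1) ^ 2 * (S.ρ t x * ‖S.u t x‖ ^ 2) := by
    rw [norm_sub_sq_real, inner_smul_right, norm_smul, real_inner_comm, mul_pow, Real.norm_eq_abs,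
      sq_abs]
    ring
  have hx2 := S.int_ρx2 t ht
  have hinner := (S.integrable_ρ_mul_inner ht).const_mul (2 * (t + 1))
  have hsub : Integrable fun x =>
      S.ρ t x * ‖x‖ ^ 2 - 2 * (t + 1) * (S.ρ t x * ⟪S.u t x, x⟫_ℝ) := hx2.sub hinner
  simp_rw [hsq]
  rw [integral_add hsub ((S.int_ρu2 t ht).const_mul _), integral_sub hx2 hinner,
    integral_const_mul, integral_const_mul, IJ, IE, G, F, Ek]
  ring

lemma sq_mul_I_le_IJ (ht : t ∈ Set.Icc 0 T) : (t + 1) ^ 2 * S.I t ≤ S.IJ t := by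
  rw [S.IJ_eq_add_integral ht]
  exact le_add_of_nonneg_right (mul_nonneg (by norm_num)
    (integral_nonneg fun x => mul_nonneg (S.ρ_nonneg t ht x) (sq_nonneg _)))

end Functionals

section Decay

variable {t : ℝ}

lemma antitoneOn_IJ_div_rpow (hγ : 1 < γ) :
    AntitoneOn (fun t => S.IJ t / (t + 1) ^ max (2 - n * (γ - 1)) 0) (Set.Icc 0 T) := by
  refine antitoneOn_div_rpow_of_mul_deriv_le (convex_Icc 0 T) (fun t ht => by linarith [ht.1])
    S.continuousOn_IJ (J' := fun t => (t + 1) * (2 - n * (γ - 1)) * S.I t) ?_ ?_ <;>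
    rw [interior_Icc] <;> intro t ht
  · exact S.hasDerivAt_IJ hγ ht
  · have ht' := Set.Ioo_subset_Icc_self ht
    have hI := S.I_nonneg hγ ht'
    calc (t + 1) * ((t + 1) * (2 - n * (γ - 1)) * S.I t)
        = (2 - n * (γ - 1)) * ((t + 1) ^ 2 * S.I t) := by ring
      _ ≤ max (2 - n * (γ - 1)) 0 * ((t + 1) ^ 2 * S.I t) := by
          gcongr
          exact le_max_left _ _
      _ ≤ max (2 - n * (γ - 1)) 0 * S.IJ t :=
          mul_le_mul_of_nonneg_left (S.sq_mul_I_le_IJ ht') (le_max_right _ _)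

lemma I_le_IJ_zero_div_rpow_min (hγ : 1 < γ) (ht : t ∈ Set.Icc 0 T) :
    S.I t ≤ S.IJ 0 / (t + 1) ^ min (n * (γ - 1)) 2 := by
  have ht1 : 0 < t + 1 := by linarith [ht.1]
  have hexp : min (n * (γ - 1)) 2 = 2 - max (2 - n * (γ - 1)) 0 := by
    rw [← min_sub_sub_left, sub_sub_cancel, sub_zero]
  have hanti := S.antitoneOn_IJ_div_rpow hγ (Set.left_mem_Icc.2 (ht.1.trans ht.2)) ht ht.1
  simp only [zero_add, Real.one_rpow, div_one] at hanti
  rw [le_div_iff₀ (by positivity)]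
  calc S.I t * (t + 1) ^ min (n * (γ - 1)) 2
      = (t + 1) ^ 2 * S.I t / (t + 1) ^ max (2 - n * (γ - 1)) 0 := by
        rw [hexp, Real.rpow_sub ht1, Real.rpow_two]
        ring
    _ ≤ S.IJ t / (t + 1) ^ max (2 - n * (γ - 1)) 0 := by
        gcongr
        exact S.sq_mul_I_le_IJ ht
    _ ≤ S.IJ 0 := hanti

end Decay

end IsentropicEulerSolution

/-- **Proposition 3.6, isentropic Euler case: upper decay of the potential energy.**
With `IJ(0) = G(0) − F(0) + IE(0)`: if `1 < γ ≤ 1 + 2/n` then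
`I(t) ≤ IJ(0)/(t+1)^{n(γ−1)}`; if `γ > 1 + 2/n` then `I(t) ≤ IJ(0)/(t+1)²`. -/
theorem IsentropicEulerSolution.potential_energy_upper_decay
    {n : ℕ} {γ T : ℝ} (hn : 1 ≤ n) (hγ : 1 < γ) (hT : 0 < T)
    (S : IsentropicEulerSolution n γ T) :
    (γ ≤ 1 + 2 / n →
      ∀ t ∈ Set.Icc 0 T,
        S.I t ≤ (S.G 0 - S.F 0 + S.IE 0) / (t + 1) ^ ((n : ℝ) * (γ - 1))) ∧
    (1 + 2 / n < γ →
      ∀ t ∈ Set.Icc 0 T,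
        S.I t ≤ (S.G 0 - S.F 0 + S.IE 0) / (t + 1) ^ 2) := by
  have hn' : (0 : ℝ) < n := Nat.cast_pos.2 hn
  have hIJ : S.G 0 - S.F 0 + S.IE 0 = S.IJ 0 := by simp [IsentropicEulerSolution.IJ]
  rw [hIJ]
  refine ⟨fun hle t ht => ?_, fun hlt t ht => ?_⟩
  · have hexp : n * (γ - 1) ≤ 2 := (le_div_iff₀' hn').1 (sub_le_iff_le_add'.2 hle)
    simpa only [min_eq_left hexp] using S.I_le_IJ_zero_div_rpow_min hγ ht
  · have hexp : 2 ≤ n * (γ - 1) := ((div_lt_iff₀' hn').1 (lt_sub_iff_add_lt'.2 hlt)).le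
    simpa only [min_eq_right hexp, Real.rpow_two] using S.I_le_IJ_zero_div_rpow_min hγ ht
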